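/- arXiv:1503.05901 — 8 statements merged into one kernel-verified Lean document; each statement's English description precedes it below -/
import Mathlib

section
/- Let A ≥ c2 > c1 > 0 be real numbers and set θ = (c2 − c1)/(A − c1). Let (a_i)_{i≥1} be a sequence of real numbers with a_i ≤ A for every i ≥ 1. Then for every positive integer n satisfying Σ_{i=1}^{n} a_i ≥ c2·n, the number of integers m ∈ {1,…,n} that are c1-Pliss times for (a_i) is at least θ·n. -/
/-- `m ≥ 1` is a `c`-Pliss time for the sequence `a` (indexed from `1`):
`∑_{i=k+1}^{m} a i ≥ c·(m-k)` for every `k = 0, 1, …, m-1`. -/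
def PlissTime (a : ℕ → ℝ) (c : ℝ) (m : ℕ) : Prop :=
  1 ≤ m ∧ ∀ k < m, c * ((m : ℝ) - (k : ℝ)) ≤ ∑ i ∈ Finset.Icc (k + 1) m, a i

lemma pliss_Icc_sum (a : ℕ → ℝ) (k m : ℕ) (h : k ≤ m) :
    ∑ i ∈ Finset.Icc (k + 1) m, a i
      = ∑ i ∈ Finset.Icc 1 m, a i - ∑ i ∈ Finset.Icc 1 k, a i := by
  induction m, h using Nat.le_induction with
  | base => simp
  | succ m hm ih =>
    rw [Finset.sum_Icc_succ_top (by omega), Finset.sum_Icc_succ_top (by omega), ih]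
    ring

open Classical in
lemma pliss_aux (A c : ℝ) (hA : c < A) (a : ℕ → ℝ) (ha : ∀ i, 1 ≤ i → a i ≤ A) (n : ℕ) :
    ∀ k ≤ n, ∑ i ∈ Finset.Icc 1 k, a i - c * k ≤
      (A - c) * (((Finset.Icc 1 n).filter (PlissTime a c)).card : ℝ) := by
  induction n with
  | zero =>
    intro k hk
    obtain rfl : k = 0 := by omega
    simp
  | succ n ih =>
    rw [← Finset.insert_Icc_right_eq_Icc_add_one (by omega : 1 ≤ n + 1), Finset.filter_insert]
    by_cases hp : PlissTime a c (n + 1)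
    · rw [if_pos hp, Finset.card_insert_of_notMem (by simp)]
      push_cast
      intro k hk
      rcases Nat.lt_or_ge n k with h | h
      · obtain rfl : k = n + 1 := by omega
        rw [Finset.sum_Icc_succ_top (by omega)]
        have := ih n le_rfl
        have := ha (n + 1) (by omega)
        push_cast
        linarith
      · have := ih k h
        linarith
    · rw [if_neg hp]
      intro k hk
      rcases Nat.lt_or_ge n k with h | h
      · obtain rfl : k = n + 1 := by omega
        unfold PlissTime at hp
        push Not at hp
        obtain ⟨j, hj, hlt⟩ := hp (by omega)
        rw [pliss_Icc_sum a j (n + 1) (by omega)] at hlt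
        have := ih j (by omega)
        linarith
      · exact ih k h

/-- **Pliss lemma.** If `A ≥ c2 > c1 > 0`, `θ = (c2 - c1)/(A - c1)`, `a i ≤ A` for all `i ≥ 1`,
and `∑_{i=1}^{n} a i ≥ c2·n`, then there are at least `θ·n` many `c1`-Pliss times for `a`
in `{1, …, n}`. -/
theorem pliss_lemma (A c1 c2 : ℝ) (hA : c2 ≤ A) (h21 : c1 < c2) (h1 : 0 < c1)
    (a : ℕ → ℝ) (ha : ∀ i, 1 ≤ i → a i ≤ A)
    (n : ℕ) (hn : 1 ≤ n) (hsum : c2 * (n : ℝ) ≤ ∑ i ∈ Finset.Icc 1 n, a i) :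
    ((c2 - c1) / (A - c1)) * (n : ℝ) ≤
      (({m | m ∈ Finset.Icc 1 n ∧ PlissTime a c1 m} : Set ℕ).ncard : ℝ) := by
  classical
  have h := pliss_aux A c1 (by linarith) a ha n n le_rfl
  have e : ({m | m ∈ Finset.Icc 1 n ∧ PlissTime a c1 m} : Set ℕ)
      = ((Finset.Icc 1 n).filter (PlissTime a c1) : Finset ℕ) := by
    ext m
    simp
  rw [e, Set.ncard_coe_finset, div_mul_eq_mul_div, div_le_iff₀ (by linarith)]
  have h' : (c2 - c1) * (n : ℝ) ≤
      (A - c1) * (((Finset.Icc 1 n).filter (PlissTime a c1)).card : ℝ) := by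
    refine le_trans ?_ (le_of_le_of_eq h (by congr!))
    linarith
  rw [mul_comm (_ : ℝ) (A - c1)]
  exact h'
end

section
/- Let A ≥ c2 > c1 > 0 be real numbers, set θ = (c2 − c1)/(A − c1), and let (a_i)_{i≥1} be a sequence of real numbers with a_i ≤ A for every i ≥ 1. Let c0 < c1, let I be a subset of the positive integers, and let (b_i)_{i≥1} be a sequence of real numbers with b_i = a_i for i ∈ I and b_i ≤ min{a_i, c0} for i ∉ I. Then: (a) every c1-Pliss time for (b_i) is a c1-Pliss time for (a_i); (b) every c1-Pliss time for (b_i) belongs to I. Consequently, for every positive integer n with Σ_{i=1}^{n} b_i ≥ c2·n, there are at least θ·n c1-Pliss times for (a_i) belonging to I ∩ {1,…,n}. -/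
lemma pliss_sum_split (b : ℕ → ℝ) (k m : ℕ) (h : k ≤ m) :
    ∑ i ∈ Finset.Icc (k + 1) m, b i
      = ∑ i ∈ Finset.Icc 1 m, b i - ∑ i ∈ Finset.Icc 1 k, b i := by
  induction m, h using Nat.le_induction with
  | base => simp
  | succ m hm ih =>
    rw [Finset.sum_Icc_succ_top (by omega), Finset.sum_Icc_succ_top (by omega), ih]
    ring

open Classical in
lemma pliss_count (b : ℕ → ℝ) (A c : ℝ) (hA : c ≤ A) (hb : ∀ i, 1 ≤ i → b i ≤ A) (n : ℕ) :
    ∀ k ≤ n, ∑ i ∈ Finset.Icc 1 k, b i - c * k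
      ≤ (A - c) * (((Finset.Icc 1 n).filter (PlissTime b c)).card : ℝ) := by
  induction n with
  | zero =>
    intro k hk
    obtain rfl : k = 0 := by omega
    simp
  | succ n ih =>
    have hins : Finset.Icc 1 (n + 1) = insert (n + 1) (Finset.Icc 1 n) := by
      ext x; simp only [Finset.mem_Icc, Finset.mem_insert]; omega
    intro k hk
    rw [hins, Finset.filter_insert]
    by_cases hp : PlissTime b c (n + 1)
    · rw [if_pos hp, Finset.card_insert_of_notMem (by simp)]
      push_cast
      rcases Nat.lt_or_ge n k with h | h
      · obtain rfl : k = n + 1 := by omega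
        rw [Finset.sum_Icc_succ_top (by omega)]
        have h1 := ih n le_rfl
        have h2 := hb (n + 1) (by omega)
        push_cast
        linarith
      · have h1 := ih k h
        linarith
    · rw [if_neg hp]
      rcases Nat.lt_or_ge n k with h | h
      · obtain rfl : k = n + 1 := by omega
        simp only [PlissTime, not_and, not_forall, not_le] at hp
        obtain ⟨j, hj, hlt⟩ := hp (by omega)
        rw [pliss_sum_split b j (n + 1) hj.le] at hlt
        have h1 := ih j (by omega)
        linarith
      · exact ih k h

/-- **Localized Pliss lemma (1).** Lowering the sequence `a` to `b` outside a prescribed set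
`I` (with `b i ≤ min (a i) c0`, `c0 < c1`, there): (a) every `c1`-Pliss time of `b` is a
`c1`-Pliss time of `a`; (b) every `c1`-Pliss time of `b` belongs to `I`. Consequently, if
`∑_{i=1}^{n} b i ≥ c2·n` then there are at least `θ·n` many `c1`-Pliss times for `a` inside
`I ∩ {1,…,n}`, where `θ = (c2 - c1)/(A - c1)`. -/
theorem localized_pliss_one (A c1 c2 : ℝ) (hA : c2 ≤ A) (h21 : c1 < c2) (h1 : 0 < c1)
    (a : ℕ → ℝ) (ha : ∀ i, 1 ≤ i → a i ≤ A)
    (c0 : ℝ) (hc0 : c0 < c1) (I : Set ℕ) (b : ℕ → ℝ)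
    (hbI : ∀ i, 1 ≤ i → i ∈ I → b i = a i)
    (hbnI : ∀ i, 1 ≤ i → i ∉ I → b i ≤ min (a i) c0) :
    (∀ m, PlissTime b c1 m → PlissTime a c1 m) ∧
    (∀ m, PlissTime b c1 m → m ∈ I) ∧
    (∀ n : ℕ, 1 ≤ n → c2 * (n : ℝ) ≤ ∑ i ∈ Finset.Icc 1 n, b i →
      ((c2 - c1) / (A - c1)) * (n : ℝ) ≤
        (({m | m ∈ I ∧ m ∈ Finset.Icc 1 n ∧ PlissTime a c1 m} : Set ℕ).ncard : ℝ)) := by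
  have hba : ∀ i, 1 ≤ i → b i ≤ a i := by
    intro i hi
    by_cases h : i ∈ I
    · exact (hbI i hi h).le
    · exact (hbnI i hi h).trans (min_le_left _ _)
  have pa : ∀ m, PlissTime b c1 m → PlissTime a c1 m := by
    rintro m ⟨hm, h⟩
    refine ⟨hm, fun k hk => (h k hk).trans (Finset.sum_le_sum fun i hi => hba i ?_)⟩
    have := (Finset.mem_Icc.1 hi).1
    omega
  have pb : ∀ m, PlissTime b c1 m → m ∈ I := by
    rintro m ⟨hm, h⟩
    by_contra hI
    obtain ⟨k, rfl⟩ : ∃ k, m = k + 1 := ⟨m - 1, by omega⟩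
    have h2 := h k (by omega)
    have h3 := (hbnI _ hm hI).trans (min_le_right _ _)
    simp only [Finset.Icc_self, Finset.sum_singleton] at h2
    push_cast at h2
    linarith
  refine ⟨pa, pb, fun n hn hs => ?_⟩
  classical
  have hpos : 0 < A - c1 := by linarith
  have hc := pliss_count b A c1 (by linarith) (fun i hi => (hba i hi).trans (ha i hi)) n n le_rfl
  have hsub : ((Finset.Icc 1 n).filter (PlissTime b c1)).card ≤
      ({m | m ∈ I ∧ m ∈ Finset.Icc 1 n ∧ PlissTime a c1 m} : Set ℕ).ncard := by
    rw [← Set.ncard_coe_finset]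
    refine Set.ncard_le_ncard ?_ ((Finset.finite_toSet (Finset.Icc 1 n)).subset ?_)
    · intro m hm
      have hm := Finset.mem_filter.1 (Finset.mem_coe.1 hm)
      exact ⟨pb m hm.2, hm.1, pa m hm.2⟩
    · intro m hm
      exact hm.2.1
  refine le_trans ?_ (Nat.cast_le.2 hsub)
  rw [div_mul_eq_mul_div, div_le_iff₀ hpos]
  linarith
end

section
/- Let A ≥ c2 > c1 > 0 be real numbers, set θ = (c2 − c1)/(A − c1), and let (a_i)_{i≥1} be a sequence of real numbers with a_i ≤ A for every i ≥ 1. Suppose the positive integers are partitioned as I ∪ J with I infinite and a_i ≥ c1 for every i ∈ J, and let (b_j)_{j≥1} be the J-reduced sequence of (a_i), i.e. b_j = a_{i(j)} where i(j) is the j-th smallest element of I. Then for every m ≥ 1 that is a c1-Pliss time for (b_j), the integer i(m) ∈ I is a c1-Pliss time for (a_i). Consequently, for every positive integer n with Σ_{j=1}^{n} b_j ≥ c2·n, there are at least θ·n c1-Pliss times for (a_i) in I ∩ {1,…,i(n)}. -/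
/-- For an (infinite) set `I` of positive integers, `reduceIdx I j` is the `j`-th smallest
element of `I` (for `j ≥ 1`). -/
noncomputable def reduceIdx (I : Set ℕ) (j : ℕ) : ℕ := Nat.nth (· ∈ I) (j - 1)

/-- partial sums of `a - c` -/
noncomputable def plissSum (a : ℕ → ℝ) (c : ℝ) (k : ℕ) : ℝ := ∑ i ∈ Finset.range k, (a (i + 1) - c)

lemma plissSum_succ (a : ℕ → ℝ) (c : ℝ) (k : ℕ) :
    plissSum a c (k + 1) = plissSum a c k + (a (k + 1) - c) := by
  unfold plissSum; rw [Finset.sum_range_succ]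

lemma sum_Icc_eq_plissSum (a : ℕ → ℝ) (c : ℝ) (k m : ℕ) (h : k ≤ m) :
    ∑ i ∈ Finset.Icc (k + 1) m, a i = plissSum a c m - plissSum a c k + c * ((m : ℝ) - k) := by
  induction m, h using Nat.le_induction with
  | base => simp
  | succ m hm ih =>
    rw [Finset.sum_Icc_succ_top (by omega), ih, plissSum_succ]
    push_cast
    ring

lemma plissTime_iff (a : ℕ → ℝ) (c : ℝ) (m : ℕ) :
    PlissTime a c m ↔ 1 ≤ m ∧ ∀ k < m, plissSum a c k ≤ plissSum a c m := by
  unfold PlissTime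
  refine and_congr_right fun _ => forall₂_congr fun k hk => ?_
  rw [sum_Icc_eq_plissSum a c k m hk.le]
  constructor <;> intro h <;> linarith

open Classical in
lemma plissSum_le (b : ℕ → ℝ) (c A : ℝ) (hcA : c ≤ A) (hb : ∀ j, 1 ≤ j → b j ≤ A) (n : ℕ) :
    ∀ k ≤ n, plissSum b c k ≤ (A - c) * (((Finset.Icc 1 n).filter (PlissTime b c)).card : ℝ) := by
  induction n with
  | zero =>
    intro k hk
    obtain rfl : k = 0 := by omega
    simp [plissSum]
  | succ n ih =>
    have hIcc : Finset.Icc 1 (n + 1) = insert (n + 1) (Finset.Icc 1 n) := by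
      ext x; simp only [Finset.mem_Icc, Finset.mem_insert]; omega
    rw [hIcc, Finset.filter_insert]
    by_cases hP : PlissTime b c (n + 1)
    · rw [if_pos hP, Finset.card_insert_of_notMem (by simp)]
      push_cast
      intro k hk
      rcases Nat.lt_or_ge n k with h | h
      · obtain rfl : k = n + 1 := by omega
        rw [plissSum_succ]
        have h1 := ih n le_rfl
        have h2 := hb (n + 1) (by omega)
        linarith
      · have h1 := ih k h
        linarith
    · rw [if_neg hP]
      intro k hk
      rcases Nat.lt_or_ge n k with h | h
      · obtain rfl : k = n + 1 := by omega
        rw [plissTime_iff] at hP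
        push Not at hP
        obtain ⟨j, hj, hlt⟩ := hP (by omega)
        exact hlt.le.trans (ih j (by omega))
      · exact ih k h

open Classical in
lemma reduce_mono (a : ℕ → ℝ) (c : ℝ) (I : Set ℕ) (h0 : 0 ∉ I)
    (hJ : ∀ i, 1 ≤ i → i ∉ I → c ≤ a i) :
    Monotone (fun k => plissSum a c k -
      plissSum (fun j => a (reduceIdx I j)) c (Nat.count (· ∈ I) (k + 1))) := by
  refine monotone_nat_of_le_succ fun k => ?_
  rw [Nat.count_succ _ (k + 1)]
  by_cases h : k + 1 ∈ I
  · rw [if_pos h, plissSum_succ, plissSum_succ]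
    have : reduceIdx I (Nat.count (· ∈ I) (k + 1) + 1) = k + 1 := by
      unfold reduceIdx
      rw [Nat.add_sub_cancel]
      exact Nat.nth_count (p := (· ∈ I)) h
    simp only [this]
    linarith
  · rw [if_neg h, plissSum_succ]
    have := hJ (k + 1) (by omega) h
    simp only [add_zero]
    linarith

lemma pliss_reduce (a : ℕ → ℝ) (c : ℝ) (I : Set ℕ) (hIpos : ∀ i ∈ I, 1 ≤ i) (hIinf : I.Infinite)
    (hJ : ∀ i, 1 ≤ i → i ∉ I → c ≤ a i) (m : ℕ) (hm : 1 ≤ m)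
    (hP : PlissTime (fun j => a (reduceIdx I j)) c m) :
    reduceIdx I m ∈ I ∧ PlissTime a c (reduceIdx I m) := by
  classical
  have hmem : reduceIdx I m ∈ I := Nat.nth_mem_of_infinite (p := (· ∈ I)) hIinf (m - 1)
  refine ⟨hmem, ?_⟩
  rw [plissTime_iff] at hP ⊢
  refine ⟨hIpos _ hmem, fun k hk => ?_⟩
  have hmono := reduce_mono a c I (fun h => by have := hIpos 0 h; omega) hJ hk.le
  have hc : Nat.count (· ∈ I) (reduceIdx I m) = m - 1 :=
    Nat.count_nth_of_infinite (p := (· ∈ I)) hIinf (m - 1)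
  have hc1 : Nat.count (· ∈ I) (reduceIdx I m + 1) = m := by
    rw [Nat.count_succ, if_pos hmem, hc]; omega
  have hc2 : Nat.count (· ∈ I) (k + 1) ≤ m - 1 := by
    rw [← hc]; exact Nat.count_monotone _ hk
  have := hP.2 (Nat.count (· ∈ I) (k + 1)) (by omega)
  simp only [hc1] at hmono
  linarith

/-- **Localized Pliss lemma (2).** Assume `A ≥ c2 > c1 > 0`, `θ = (c2-c1)/(A-c1)`,
`a i ≤ A` for `i ≥ 1`, the positive integers are partitioned as `I ∪ J` with `I` infinite and
`a i ≥ c1` on `J`, and let `b j = a (i(j))` be the `J`-reduced sequence, `i(j)` the `j`-th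
smallest element of `I`. Then every `c1`-Pliss time `m` of `b` yields the `c1`-Pliss time
`i(m) ∈ I` of `a`; consequently if `∑_{j=1}^{n} b j ≥ c2·n` then there are at least `θ·n`
many `c1`-Pliss times of `a` in `I ∩ {1,…,i(n)}`. -/
theorem localized_pliss_two (A c1 c2 : ℝ) (hA : c2 ≤ A) (h21 : c1 < c2) (h1 : 0 < c1)
    (a : ℕ → ℝ) (ha : ∀ i, 1 ≤ i → a i ≤ A)
    (I : Set ℕ) (hIpos : ∀ i ∈ I, 1 ≤ i) (hIinf : I.Infinite)
    (hJ : ∀ i, 1 ≤ i → i ∉ I → c1 ≤ a i) :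
    (∀ m, 1 ≤ m → PlissTime (fun j => a (reduceIdx I j)) c1 m →
      reduceIdx I m ∈ I ∧ PlissTime a c1 (reduceIdx I m)) ∧
    (∀ n : ℕ, 1 ≤ n →
      c2 * (n : ℝ) ≤ ∑ j ∈ Finset.Icc 1 n, a (reduceIdx I j) →
      ((c2 - c1) / (A - c1)) * (n : ℝ) ≤
        (({i | i ∈ I ∧ i ∈ Finset.Icc 1 (reduceIdx I n) ∧ PlissTime a c1 i} : Set ℕ).ncard : ℝ)) := by
  classical
  refine ⟨fun m hm hP => pliss_reduce a c1 I hIpos hIinf hJ m hm hP, fun n hn hsum => ?_⟩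
  have hmem : ∀ j, reduceIdx I j ∈ I := fun j =>
    Nat.nth_mem_of_infinite (p := (· ∈ I)) hIinf (j - 1)
  have hle := plissSum_le (fun j => a (reduceIdx I j)) c1 A (by linarith)
    (fun j _ => ha _ (hIpos _ (hmem j))) n n le_rfl
  have hs := sum_Icc_eq_plissSum (fun j => a (reduceIdx I j)) c1 0 n (by omega)
  have h0 : plissSum (fun j => a (reduceIdx I j)) c1 0 = 0 := by simp [plissSum]
  simp only [zero_add, Nat.cast_zero, sub_zero, h0] at hs
  have hcard : ((Finset.Icc 1 n).filter (PlissTime (fun j => a (reduceIdx I j)) c1)).card ≤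
      ({i | i ∈ I ∧ i ∈ Finset.Icc 1 (reduceIdx I n) ∧ PlissTime a c1 i} : Set ℕ).ncard := by
    rw [← Set.ncard_coe_finset]
    refine Set.ncard_le_ncard_of_injOn (reduceIdx I) ?_ ?_ ?_
    · intro j hj
      simp only [Finset.coe_filter, Finset.mem_Icc, Set.mem_setOf_eq] at hj
      obtain ⟨h3, h4⟩ := pliss_reduce a c1 I hIpos hIinf hJ j hj.1.1 hj.2
      refine ⟨h3, Finset.mem_Icc.2 ⟨hIpos _ h3, ?_⟩, h4⟩
      exact Nat.nth_monotone (p := (· ∈ I)) hIinf (by omega)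
    · intro x hx y hy hxy
      simp only [Finset.coe_filter, Finset.mem_Icc, Set.mem_setOf_eq] at hx hy
      have := Nat.nth_injective (p := (· ∈ I)) hIinf hxy
      omega
    · exact (Finset.finite_toSet (Finset.Icc 1 (reduceIdx I n))).subset fun i hi => hi.2.1
  have hcard' : (((Finset.Icc 1 n).filter
      (PlissTime (fun j => a (reduceIdx I j)) c1)).card : ℝ) ≤ _ := Nat.cast_le.2 hcard
  refine le_trans ?_ hcard'
  have hpos : 0 < A - c1 := by linarith
  rw [div_mul_eq_mul_div, div_le_iff₀ hpos]
  linarith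
end

section
/- Let (a_i)_{i≥1} be a π-periodic sequence of real numbers and let c1 > 0. Then there exists an index i ∈ {1,…,π} such that i + nπ is a c1-Pliss time for (a_i) for every integer n ≥ 0 if, and only if, Σ_{i=1}^{π} a_i ≥ c1·π. -/
theorem pliss_sum_eq (a : ℕ → ℝ) (c : ℝ) (k d : ℕ) :
    ∑ i ∈ Finset.Icc (k + 1) (k + d), a i - c * (((k + d : ℕ) : ℝ) - (k : ℝ)) =
      ∑ j ∈ Finset.range (k + d), (a (j + 1) - c) - ∑ j ∈ Finset.range k, (a (j + 1) - c) := by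
  induction d with
  | zero => simp
  | succ d ih =>
    rw [← add_assoc, Finset.sum_Icc_succ_top (by omega), Finset.sum_range_succ]
    push_cast at ih ⊢
    linarith

theorem pliss_shift (π : ℕ) (a : ℕ → ℝ) (hper : ∀ i, 1 ≤ i → a (i + π) = a i) (c : ℝ) (m : ℕ) :
    ∑ j ∈ Finset.range (m + π), (a (j + 1) - c) =
      ∑ j ∈ Finset.range m, (a (j + 1) - c) + ∑ j ∈ Finset.range π, (a (j + 1) - c) := by
  induction m with
  | zero => simp
  | succ m ih =>
    have h := hper (m + 1) (by omega)
    rw [show m + 1 + π = m + π + 1 by ring, Finset.sum_range_succ, Finset.sum_range_succ, ih,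
      show m + π + 1 = m + 1 + π by ring, h]
    ring

/-- For a `π`-periodic sequence `a` and `c1 > 0`, there exists `i ∈ {1,…,π}` such that
`i + n·π` is a `c1`-Pliss time for every `n ≥ 0` if, and only if, `∑_{i=1}^{π} a i ≥ c1·π`. -/
theorem ultimate_pliss_time_iff (π : ℕ) (hπ : 1 ≤ π) (a : ℕ → ℝ)
    (hper : ∀ i, 1 ≤ i → a (i + π) = a i) (c1 : ℝ) (hc1 : 0 < c1) :
    (∃ i, 1 ≤ i ∧ i ≤ π ∧ ∀ n : ℕ, PlissTime a c1 (i + n * π)) ↔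
      c1 * (π : ℝ) ≤ ∑ i ∈ Finset.Icc 1 π, a i := by
  obtain ⟨S, hS⟩ : ∃ S : ℕ → ℝ, S = fun m => ∑ j ∈ Finset.range m, (a (j + 1) - c1) := ⟨_, rfl⟩
  have hsum : ∀ k m, k ≤ m → ∑ i ∈ Finset.Icc (k + 1) m, a i - c1 * ((m : ℝ) - (k : ℝ)) =
      S m - S k := by
    intro k m hkm
    obtain ⟨d, rfl⟩ := Nat.exists_eq_add_of_le hkm
    simpa only [hS] using pliss_sum_eq a c1 k d
  have hshift : ∀ m, S (m + π) = S m + S π := by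
    intro m
    simpa only [hS] using pliss_shift π a hper c1 m
  have hS0 : S 0 = 0 := by simp [hS]
  have hmul : ∀ (n m : ℕ), S (m + n * π) = S m + n * S π := by
    intro n m
    induction n with
    | zero => simp
    | succ n ih =>
      rw [show m + (n + 1) * π = m + n * π + π by ring, hshift, ih]
      push_cast
      ring
  have hD := hsum 0 π (by omega)
  simp only [Nat.cast_zero, sub_zero, hS0, zero_add] at hD
  constructor
  · rintro ⟨i, hi1, hi2, h⟩
    have h1 := (h 1).2 i (by omega)
    have h2 := hsum i (i + 1 * π) (by omega)
    have h3 := hmul 1 i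
    push_cast at h1 h2 h3
    linarith
  · intro h
    have hD0 : 0 ≤ S π := by linarith
    obtain ⟨i, hi, hmax⟩ := Finset.exists_max_image (Finset.Icc 1 π) S ⟨1, by simp [hπ]⟩
    rw [Finset.mem_Icc] at hi
    refine ⟨i, hi.1, hi.2, fun n => ⟨by omega, fun k hk => ?_⟩⟩
    have h2 := hsum k (i + n * π) hk.le
    have h3 := hmul n i
    have hn : (0 : ℝ) ≤ n * S π := by positivity
    suffices S k ≤ S (i + n * π) by linarith
    rcases Nat.eq_zero_or_pos k with rfl | hk0
    · have := hmax π (by simp [hπ])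
      linarith
    · have e := Nat.mod_add_div (k - 1) π
      have hr := Nat.mod_lt (k - 1) (show π > 0 by omega)
      generalize (k - 1) % π = r at e hr
      generalize (k - 1) / π = q at e
      have hk' : k = (r + 1) + q * π := by
        rw [mul_comm q π]
        omega
      have hq : q ≤ n := by
        by_contra hlt
        have : (n + 1) * π ≤ q * π := Nat.mul_le_mul_right _ (by omega)
        rw [add_mul] at this
        omega
      have h4 := hmul q (r + 1)
      have h5 := hmax (r + 1) (by rw [Finset.mem_Icc]; omega)
      have h6 : (q : ℝ) * S π ≤ n * S π :=
        mul_le_mul_of_nonneg_right (by exact_mod_cast hq) hD0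
      rw [hk']
      linarith
end

section
/- Let (a_i)_{i≥1} be a π-periodic sequence of real numbers and let c1 > 0. If m ≥ π is a c1-Pliss time for (a_i), then m + nπ is a c1-Pliss time for (a_i) for every integer n ≥ 0. -/
/-- For a `π`-periodic sequence `a` and `c1 > 0`: if `m ≥ π` is a `c1`-Pliss time for `a`,
then `m + n·π` is a `c1`-Pliss time for `a` for every integer `n ≥ 0`. -/
theorem pliss_time_periodic (π : ℕ) (hπ : 1 ≤ π) (a : ℕ → ℝ)
    (hper : ∀ i, 1 ≤ i → a (i + π) = a i) (c1 : ℝ) (hc1 : 0 < c1)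
    (m : ℕ) (hm : π ≤ m) (hPliss : PlissTime a c1 m) :
    ∀ n : ℕ, PlissTime a c1 (m + n * π) := by
  have shift : ∀ k l : ℕ, ∑ i ∈ Finset.Icc (k + π + 1) (l + π), a i
      = ∑ i ∈ Finset.Icc (k + 1) l, a i := by
    intro k l
    have h := Finset.map_add_right_Icc (k + 1) l π
    rw [show k + π + 1 = k + 1 + π by ring, ← h, Finset.sum_map]
    refine Finset.sum_congr rfl fun i hi => ?_
    have := (Finset.mem_Icc.mp hi).1
    exact hper i (by omega)
  have step : ∀ M : ℕ, π ≤ M → PlissTime a c1 M → PlissTime a c1 (M + π) := by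
    rintro M hM ⟨h1, h2⟩
    refine ⟨by omega, fun k hk => ?_⟩
    by_cases hkM : k < M
    · have e1 := h2 k hkM
      have e2 := h2 (M - π) (by omega)
      rw [← shift (M - π) M, Nat.sub_add_cancel hM, Nat.cast_sub hM] at e2
      have hs : ∑ i ∈ Finset.Icc (k + 1) (M + π), a i
          = ∑ i ∈ Finset.Icc (k + 1) M, a i + ∑ i ∈ Finset.Icc (M + 1) (M + π), a i := by
        rw [← Finset.sum_union]
        · congr 1
          ext i
          simp only [Finset.mem_Icc, Finset.mem_union]
          omega
        · rw [Finset.disjoint_left]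
          intro i hi hj
          simp only [Finset.mem_Icc] at hi hj
          omega
      rw [hs]
      push_cast
      linarith
    · obtain ⟨j, rfl⟩ : ∃ j, k = j + π := ⟨k - π, by omega⟩
      rw [shift]
      have := h2 j (by omega)
      push_cast
      linarith
  intro n
  induction n with
  | zero => simpa using hPliss
  | succ n ih =>
    have := step (m + n * π) (by omega) ih
    rwa [show m + (n + 1) * π = m + n * π + π by ring]
end

section
/- Let A ≥ c2 > c1 > 0 be real numbers and set θ = (c2 − c1)/(A − c1). Let (a_i)_{i≥1} be a π-periodic sequence of real numbers with a_i ≤ A for every i ≥ 1, and suppose {1,…,π} is partitioned as I0 ∪ J0 with I0 nonempty, such that a_i ≥ c1 for every i ∈ J0 and (1/card I0)·Σ_{i∈I0} a_i ≥ c1. Then there exists an ultimate c1-Pliss time i ∈ I0 for (a_i). Moreover, if (1/card I0)·Σ_{i∈I0} a_i ≥ c2, then there are at least θ·card(I0) ultimate c1-Pliss times i ∈ I0 for (a_i). -/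
theorem shift_mul (a : ℕ → ℝ) (p : ℕ) (hper : ∀ i, 1 ≤ i → a (i + p) = a i) (r q : ℕ)
    (hr : 1 ≤ r) : a (r + q * p) = a r := by
  induction q with
  | zero => simp
  | succ q ih =>
    rw [← ih, ← hper (r + q * p) (by omega)]
    congr 1; ring

/-- Telescoped count: abstract version of the argument. -/
theorem record_count (S : ℕ → ℝ) (p : ℕ) (hp : 1 ≤ p) (D B : ℝ) (hB : 0 ≤ B)
    (hS : ∀ m, S (m + p) = S m + D) (U : Finset ℕ)
    (h : ∀ m < p, (∀ k, m + 1 ≤ k → k ≤ m + 1 + p → S k ≤ S (m + 1 + p)) →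
      S (m + 1 + p) ≤ S (m + p) + (if m + 1 ∈ U then B else 0)) :
    D ≤ B * (U.card : ℝ) := by
  have hne : ∀ m, (Finset.Icc m (m + p)).Nonempty := fun m => ⟨m, by simp⟩
  let M : ℕ → ℝ := fun m => (Finset.Icc m (m + p)).sup' (hne m) S
  have hle : ∀ m k, m ≤ k → k ≤ m + p → S k ≤ M m := fun m k h1 h2 =>
    Finset.le_sup' S (Finset.mem_Icc.2 ⟨h1, h2⟩)
  have hatt : ∀ m, ∃ k, m ≤ k ∧ k ≤ m + p ∧ M m = S k := fun m => by
    obtain ⟨k, hk, e⟩ := Finset.exists_mem_eq_sup' (hne m) S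
    rw [Finset.mem_Icc] at hk
    exact ⟨k, hk.1, hk.2, e⟩
  have hMp : M 0 + D ≤ M p := by
    obtain ⟨k, h1, h2, e⟩ := hatt 0
    rw [e, ← hS]
    exact hle p _ (by omega) (by omega)
  have hinc : ∀ m ∈ Finset.range p, M (m + 1) - M m ≤ if m + 1 ∈ U then B else 0 := by
    intro m hm
    rw [Finset.mem_range] at hm
    have h0 : (0 : ℝ) ≤ if m + 1 ∈ U then B else 0 := by split_ifs <;> linarith
    obtain ⟨k, h1, h2, e⟩ := hatt (m + 1)
    by_cases hk : k ≤ m + p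
    · have := hle m k (by omega) hk
      linarith
    · have hk' : k = m + 1 + p := by omega
      subst hk'
      have h3 := h m hm (fun k h1 h2 => e ▸ hle (m + 1) k h1 h2)
      have h4 := hle m (m + p) (by omega) le_rfl
      linarith
  have hsum := Finset.sum_le_sum hinc
  rw [Finset.sum_range_sub, ← Finset.sum_filter, Finset.sum_const, nsmul_eq_mul] at hsum
  have hc : ((Finset.range p).filter (fun m => m + 1 ∈ U)).card ≤ U.card := by
    apply Finset.card_le_card_of_injOn (fun m => m + 1)
    · intro m hm
      simp at hm
      exact hm.2
    · intro x _ y _ hxy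
      simpa using hxy
  have hc' : (((Finset.range p).filter (fun m => m + 1 ∈ U)).card : ℝ) ≤ (U.card : ℝ) := by
    exact_mod_cast hc
  nlinarith [mul_le_mul_of_nonneg_left hc' hB]

/-- Let `A ≥ c2 > c1 > 0`, `θ = (c2-c1)/(A-c1)`, and let `a` be a `π`-periodic sequence with
`a i ≤ A`. Suppose `{1,…,π}` is partitioned as `I0 ∪ J0` with `I0` nonempty, `a i ≥ c1` on
`J0`, and the average of `a` over `I0` is at least `c1`. Then there is an ultimate
`c1`-Pliss time `i ∈ I0` (i.e. `i + n·π` is a `c1`-Pliss time for every `n ≥ 0`); moreover,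
if the average of `a` over `I0` is at least `c2`, there are at least `θ·card I0` many
ultimate `c1`-Pliss times in `I0`. -/
theorem ultimate_pliss_times_in_I0 (A c1 c2 : ℝ) (hA : c2 ≤ A) (h21 : c1 < c2) (h1 : 0 < c1)
    (π : ℕ) (hπ : 1 ≤ π) (a : ℕ → ℝ) (ha : ∀ i, 1 ≤ i → a i ≤ A)
    (hper : ∀ i, 1 ≤ i → a (i + π) = a i)
    (I0 J0 : Finset ℕ) (hdisj : Disjoint I0 J0) (hunion : I0 ∪ J0 = Finset.Icc 1 π)
    (hI0 : I0.Nonempty) (hJ0 : ∀ i ∈ J0, c1 ≤ a i)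
    (havg : c1 * (I0.card : ℝ) ≤ ∑ i ∈ I0, a i) :
    (∃ i ∈ I0, ∀ n : ℕ, PlissTime a c1 (i + n * π)) ∧
    (c2 * (I0.card : ℝ) ≤ ∑ i ∈ I0, a i →
      ((c2 - c1) / (A - c1)) * (I0.card : ℝ) ≤
        (({i | i ∈ I0 ∧ ∀ n : ℕ, PlissTime a c1 (i + n * π)} : Set ℕ).ncard : ℝ)) := by
  classical
  have hmem : ∀ i ∈ I0, 1 ≤ i ∧ i ≤ π := fun i hi => by
    have : i ∈ Finset.Icc 1 π := hunion ▸ Finset.mem_union_left _ hi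
    simpa using this
  have hmod : ∀ i, a (i + 1) = a (i % π + 1) := fun i => by
    rw [← shift_mul a π hper (i % π + 1) (i / π) (by omega)]
    congr 1
    have := Nat.mod_add_div i π
    rw [mul_comm] at this
    omega
  set f : ℕ → ℝ := fun i => if i % π + 1 ∈ I0 then a (i + 1) - c1 else 0 with hf
  have hfle : ∀ i, f i ≤ a (i + 1) - c1 := fun i => by
    simp only [hf]
    split_ifs with h
    · exact le_rfl
    · have h2 : i % π + 1 ∈ I0 ∪ J0 := by
        rw [hunion, Finset.mem_Icc]
        have := Nat.mod_lt i hπ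
        omega
      have h3 := hJ0 _ ((Finset.mem_union.1 h2).resolve_left h)
      rw [hmod]; linarith
  have hfper : ∀ i, f (i + π) = f i := fun i => by
    simp only [hf]
    rw [Nat.add_mod_right, show i + π + 1 = i + 1 + π by ring, hper _ (by omega)]
  set S : ℕ → ℝ := fun m => ∑ i ∈ Finset.range m, f i with hSdef
  have hSs : ∀ m, S (m + 1) = S m + f m := fun m => Finset.sum_range_succ f m
  obtain ⟨D, hDdef⟩ : ∃ D, D = S π := ⟨_, rfl⟩
  have hS : ∀ m, S (m + π) = S m + D := by
    intro m
    induction m with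
    | zero => simp [hDdef, hSdef]
    | succ m ih =>
      rw [show m + 1 + π = m + π + 1 by ring, hSs, hSs, ih, hfper]; ring
  have hSn : ∀ n m, S (m + n * π) = S m + n * D := by
    intro n m
    induction n with
    | zero => simp
    | succ n ih =>
      rw [show m + (n + 1) * π = m + n * π + π by ring, hS, ih]; push_cast; ring
  have hD : D = ∑ i ∈ I0, a i - c1 * (I0.card : ℝ) := by
    have e1 : D = ∑ i ∈ Finset.range π, (if i + 1 ∈ I0 then a (i + 1) - c1 else 0) := by
      rw [hDdef]
      apply Finset.sum_congr rfl
      intro i hi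
      simp only [hf]
      rw [Nat.mod_eq_of_lt (Finset.mem_range.1 hi)]
    have e2 : ∑ i ∈ I0, (a i - c1) = D := by
      rw [e1, ← Finset.sum_filter]
      symm
      apply Finset.sum_bij (fun i _ => i + 1)
      · intro i hi; exact (Finset.mem_filter.1 hi).2
      · intro i _ j _ h; simpa using h
      · intro i hi
        have := hmem i hi
        refine ⟨i - 1, ?_, by omega⟩
        rw [Finset.mem_filter, Finset.mem_range, Nat.sub_add_cancel this.1]
        exact ⟨by omega, hi⟩
      · intro i _; rfl
    rw [← e2, Finset.sum_sub_distrib, Finset.sum_const, nsmul_eq_mul]; ring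
  have hD0 : 0 ≤ D := by linarith
  have hult : ∀ i, 1 ≤ i → i ≤ π → (∀ k, i ≤ k → k ≤ i + π → S k ≤ S (i + π)) →
      ∀ n : ℕ, PlissTime a c1 (i + n * π) := by
    intro i hi1 hi2 h n
    have key : ∀ n k, k ≤ i + n * π → S k ≤ S (i + n * π) := by
      intro n
      induction n with
      | zero =>
        intro k hk
        have := h (k + π) (by omega) (by omega)
        rw [hS, hS] at this
        simpa using this
      | succ n ih =>
        intro k hk
        have e : S (i + (n + 1) * π) = S (i + n * π) + D := by
          rw [← hS]; congr 1; ring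
        by_cases hk' : k ≤ i + n * π
        · have := ih k hk'
          linarith
        · obtain ⟨j, rfl⟩ : ∃ j, k = j + n * π := ⟨k - n * π, by omega⟩
          have h5 : (n + 1) * π = n * π + π := by ring
          have := h j (by omega) (by omega)
          rw [hS] at this
          rw [e, hSn, hSn]
          linarith
    refine ⟨by omega, fun k hk => ?_⟩
    have h6 := key n k hk.le
    generalize i + n * π = m at h6 hk
    have h7 : ∑ j ∈ Finset.Ico k m, f j = S m - S k := Finset.sum_Ico_eq_sub f hk.le
    have h8 : ∑ j ∈ Finset.Ico k m, f j ≤ ∑ j ∈ Finset.Ico k m, (a (j + 1) - c1) :=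
      Finset.sum_le_sum fun j _ => hfle j
    have h9 : ∑ j ∈ Finset.Ico k m, a (j + 1) = ∑ j ∈ Finset.Icc (k + 1) m, a j := by
      rw [Finset.sum_Ico_add' a k m 1]
      congr 1
    rw [Finset.sum_sub_distrib, h9, Finset.sum_const, Nat.card_Ico, nsmul_eq_mul,
      Nat.cast_sub hk.le] at h8
    linarith
  constructor
  · obtain ⟨i, hi, hmax⟩ := Finset.exists_max_image I0 S hI0
    obtain ⟨hi1, hi2⟩ := hmem i hi
    refine ⟨i, hi, hult i hi1 hi2 ?_⟩
    intro k hk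
    induction k, hk using Nat.le_induction with
    | base => intro _; rw [hS]; linarith
    | succ k hk ih =>
      intro hk2
      by_cases hkI : k % π + 1 ∈ I0
      · have h3 := hmax _ hkI
        by_cases hlt : k < π
        · rw [Nat.mod_eq_of_lt hlt] at h3
          rw [hS]; linarith
        · obtain ⟨j, rfl⟩ : ∃ j, k = j + π := ⟨k - π, by omega⟩
          rw [Nat.add_mod_right, Nat.mod_eq_of_lt (by omega)] at h3
          rw [show j + π + 1 = j + 1 + π by ring, hS, hS]; linarith
      · rw [hSs, show f k = 0 by simp only [hf]; rw [if_neg hkI], add_zero]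
        exact ih (by omega)
  · intro hc2
    set U : Finset ℕ := I0.filter (fun i => ∀ n : ℕ, PlissTime a c1 (i + n * π)) with hU
    have hUs : ({i | i ∈ I0 ∧ ∀ n : ℕ, PlissTime a c1 (i + n * π)} : Set ℕ) = (U : Set ℕ) := by
      ext i; simp [hU]
    rw [hUs, Set.ncard_coe_finset]
    have hB : 0 < A - c1 := by linarith
    have hcount := record_count S π hπ D (A - c1) hB.le hS U (by
      intro m hm hrec
      rw [show m + 1 + π = m + π + 1 by ring, hSs, hfper]
      by_cases hmI : m + 1 ∈ I0
      · have : m + 1 ∈ U := Finset.mem_filter.2 ⟨hmI, hult _ (by omega) (by omega) hrec⟩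
        rw [if_pos this]
        linarith [hfle m, ha (m + 1) (by omega)]
      · have : m + 1 ∉ U := fun h => hmI (Finset.mem_filter.1 h).1
        rw [if_neg this]
        have : f m = 0 := by
          simp only [hf]; rw [Nat.mod_eq_of_lt hm, if_neg hmI]
        linarith)
    rw [div_mul_eq_mul_div, div_le_iff₀ hB]
    nlinarith
end

section
/- Let X be a compact metric space, f : X → X a homeomorphism, and (ψ_n)_{n≥1} a sequence of continuous functions that is subadditive with respect to f with (ψ_n/n)_{n≥1} uniformly bounded from below. Let μ1 and μ2 be two f-invariant ergodic Borel probability measures on X. Then for every γ > 0 there exist a positive integer n0 and a positive number κ such that for every s ∈ [0,1] and every f-invariant Borel probability measure ν on X with D(ν, s·μ1 + (1−s)·μ2) < κ, one has s·ψ(μ1) + (1−s)·ψ(μ2) − γ/2 < ∫(1/n0)ψ_{n0} dν < s·ψ(μ1) + (1−s)·ψ(μ2) + γ/2. -/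
open MeasureTheory Filter

/-- `ψ(μ) = inf_{n ≥ 1} (1/n) ∫ ψ n dμ`. -/
noncomputable def psiInf {X : Type*} [MeasurableSpace X] (ψ : ℕ → X → ℝ)
    (μ : MeasureTheory.Measure X) : ℝ :=
  sInf ((fun n : ℕ => (n : ℝ)⁻¹ * ∫ x, ψ n x ∂μ) '' (Set.Ici 1))

lemma aux_fekete {X : Type*} [MetricSpace X] [CompactSpace X] [MeasurableSpace X] [BorelSpace X]
    (f : X ≃ₜ X) (ψ : ℕ → X → ℝ) (hcont : ∀ n, 1 ≤ n → Continuous (ψ n))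
    (hsub : ∀ n m, 1 ≤ n → 1 ≤ m → ∀ x, ψ (n + m) x ≤ ψ n x + ψ m ((⇑f)^[n] x))
    (C : ℝ) (hbd : ∀ n, 1 ≤ n → ∀ x, C ≤ ψ n x / (n : ℝ))
    (μ : Measure X) [IsProbabilityMeasure μ] (h : MeasurePreserving (⇑f) μ μ) :
    Tendsto (fun n : ℕ => (n : ℝ)⁻¹ * ∫ x, ψ n x ∂μ) atTop (nhds (psiInf ψ μ)) := by
  have hint : ∀ n, 1 ≤ n → Integrable (ψ n) μ := fun n hn =>
    (hcont n hn).integrable_of_hasCompactSupport (HasCompactSupport.of_compactSpace _)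
  let u : ℕ → ℝ := fun n => if n = 0 then 0 else ∫ x, ψ n x ∂μ
  have hu : ∀ n, 1 ≤ n → u n = ∫ x, ψ n x ∂μ := fun n hn => if_neg (by omega)
  have hu0 : u 0 = 0 := if_pos rfl
  have hs : Subadditive u := by
    intro m n
    rcases Nat.eq_zero_or_pos m with rfl | hm
    · simp [hu0]
    rcases Nat.eq_zero_or_pos n with rfl | hn
    · simp [hu0]
    rw [hu m hm, hu n hn, hu (m + n) (by omega)]
    have hp := h.iterate m
    have hi2 : Integrable (fun x => ψ n ((⇑f)^[m] x)) μ :=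
      hp.integrable_comp_of_integrable (hint n hn)
    have e : ∫ x, ψ n ((⇑f)^[m] x) ∂μ = ∫ x, ψ n x ∂μ := by
      have h3 := integral_map (μ := μ) (φ := (⇑f)^[m]) hp.measurable.aemeasurable (f := ψ n)
        (hcont n hn).aestronglyMeasurable
      rw [hp.map_eq] at h3
      exact h3.symm
    calc ∫ x, ψ (m + n) x ∂μ ≤ ∫ x, (ψ m x + ψ n ((⇑f)^[m] x)) ∂μ :=
          integral_mono (hint _ (by omega)) ((hint m hm).add hi2) (hsub m n hm hn)
      _ = _ := by rw [integral_add (hint m hm) hi2, e]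
  have hb : BddBelow (Set.range fun n => u n / n) := by
    refine ⟨min C 0, ?_⟩
    rintro _ ⟨n, rfl⟩
    rcases Nat.eq_zero_or_pos n with rfl | hn
    · simp
    · refine (min_le_left _ _).trans ?_
      simp only
      rw [hu n hn, ← integral_div]
      have h4 : ∫ _x, C ∂μ ≤ ∫ x, ψ n x / (n : ℝ) ∂μ :=
        integral_mono (integrable_const _) ((hint n hn).div_const _) (hbd n hn)
      simpa using h4
  have hl : hs.lim = psiInf ψ μ := by
    rw [Subadditive.lim, psiInf]
    congr 1
    refine Set.image_congr fun n hn => ?_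
    rw [hu n hn, div_eq_inv_mul]
  rw [← hl]
  refine (hs.tendsto_lim hb).congr' ?_
  filter_upwards [eventually_ge_atTop 1] with n hn
  rw [hu n hn, div_eq_inv_mul]

lemma aux_unif {X : Type*} [MetricSpace X] [CompactSpace X] [MeasurableSpace X] [BorelSpace X]
    (g : X → ℝ) (hg : Continuous g) (ε : ℝ) (hε : 0 < ε) :
    ∃ κ : ℝ, 0 < κ ∧ ∀ (ν ρ : Measure X), IsProbabilityMeasure ν → IsProbabilityMeasure ρ →
      levyProkhorovDist ν ρ < κ → |∫ x, g x ∂ν - ∫ x, g x ∂ρ| < ε := by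
  have : CompactSpace (LevyProkhorov (ProbabilityMeasure X)) :=
    LevyProkhorov.probabilityMeasureHomeomorph.compactSpace
  let G : BoundedContinuousFunction X ℝ := BoundedContinuousFunction.mkOfCompact ⟨g, hg⟩
  have hc : Continuous fun μ : LevyProkhorov (ProbabilityMeasure X) =>
      ∫ x, G x ∂(μ.toMeasure : Measure X) :=
    (ProbabilityMeasure.continuous_integral_boundedContinuousFunction G).comp
      LevyProkhorov.continuous_toMeasure_probabilityMeasure
  have huc := CompactSpace.uniformContinuous_of_continuous hc
  obtain ⟨κ, hκ, H⟩ := Metric.uniformContinuous_iff.1 huc ε hε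
  refine ⟨κ, hκ, fun ν ρ hν hρ hd => ?_⟩
  exact H (a := LevyProkhorov.ofMeasure ⟨ν, hν⟩) (b := LevyProkhorov.ofMeasure ⟨ρ, hρ⟩) hd

/-- Let `X` be a compact metric space, `f` a homeomorphism of `X`, `(ψ n)` a subadditive
sequence of continuous functions with `(ψ n / n)` uniformly bounded below, and `μ1, μ2` two
`f`-invariant ergodic Borel probability measures. Then for every `γ > 0` there exist `n0 ≥ 1`
and `κ > 0` such that for every `s ∈ [0,1]` and every `f`-invariant Borel probability measure
`ν` with `D(ν, s μ1 + (1-s) μ2) < κ` (for the Lévy–Prokhorov metric `D`, which induces the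
weak* topology), one has
`s ψ(μ1) + (1-s) ψ(μ2) - γ/2 < ∫ (1/n0) ψ n0 dν < s ψ(μ1) + (1-s) ψ(μ2) + γ/2`. -/
theorem integral_close_on_convex_combination
    {X : Type*} [MetricSpace X] [CompactSpace X] [MeasurableSpace X] [BorelSpace X]
    (f : X ≃ₜ X) (ψ : ℕ → X → ℝ) (hcont : ∀ n, 1 ≤ n → Continuous (ψ n))
    (hsub : ∀ n m, 1 ≤ n → 1 ≤ m → ∀ x, ψ (n + m) x ≤ ψ n x + ψ m ((⇑f)^[n] x))
    (C : ℝ) (hbd : ∀ n, 1 ≤ n → ∀ x, C ≤ ψ n x / (n : ℝ))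
    (μ1 μ2 : Measure X) [IsProbabilityMeasure μ1] [IsProbabilityMeasure μ2]
    (h1 : Ergodic (⇑f) μ1) (h2 : Ergodic (⇑f) μ2)
    (γ : ℝ) (hγ : 0 < γ) :
    ∃ (n0 : ℕ) (κ : ℝ), 1 ≤ n0 ∧ 0 < κ ∧
      ∀ (s : ℝ), 0 ≤ s → s ≤ 1 →
        ∀ (ν : Measure X), IsProbabilityMeasure ν → MeasurePreserving (⇑f) ν ν →
          levyProkhorovDist ν (ENNReal.ofReal s • μ1 + ENNReal.ofReal (1 - s) • μ2) < κ →
          s * psiInf ψ μ1 + (1 - s) * psiInf ψ μ2 - γ / 2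
              < (n0 : ℝ)⁻¹ * ∫ x, ψ n0 x ∂ν ∧
            (n0 : ℝ)⁻¹ * ∫ x, ψ n0 x ∂ν
              < s * psiInf ψ μ1 + (1 - s) * psiInf ψ μ2 + γ / 2 := by
  have t1 := aux_fekete f ψ hcont hsub C hbd μ1 h1.toMeasurePreserving
  have t2 := aux_fekete f ψ hcont hsub C hbd μ2 h2.toMeasurePreserving
  have e1 := Metric.tendsto_nhds.1 t1 (γ / 8) (by linarith)
  have e2 := Metric.tendsto_nhds.1 t2 (γ / 8) (by linarith)
  obtain ⟨n0, ⟨a1, a2⟩, hn⟩ := ((e1.and e2).and (eventually_ge_atTop 1)).exists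
  obtain ⟨κ, hκ, H⟩ := aux_unif (fun x => (n0 : ℝ)⁻¹ * ψ n0 x)
    (continuous_const.mul (hcont n0 hn)) (γ / 8) (by linarith)
  refine ⟨n0, κ, hn, hκ, fun s hs0 hs1 ν hν _ hd => ?_⟩
  have hint : ∀ (μ : Measure X) [IsProbabilityMeasure μ], Integrable (ψ n0) μ := fun μ _ =>
    (hcont n0 hn).integrable_of_hasCompactSupport (HasCompactSupport.of_compactSpace _)
  have hρ : IsProbabilityMeasure (ENNReal.ofReal s • μ1 + ENNReal.ofReal (1 - s) • μ2) := by
    constructor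
    simp only [Measure.add_apply, Measure.smul_apply, measure_univ, smul_eq_mul, mul_one]
    rw [← ENNReal.ofReal_add hs0 (by linarith)]
    simp
  have hh := H ν _ hν hρ hd
  rw [integral_const_mul, integral_const_mul,
    integral_add_measure ((hint μ1).smul_measure ENNReal.ofReal_ne_top)
      ((hint μ2).smul_measure ENNReal.ofReal_ne_top), integral_smul_measure,
    integral_smul_measure, ENNReal.toReal_ofReal hs0, ENNReal.toReal_ofReal (by linarith),
    smul_eq_mul, smul_eq_mul] at hh
  rw [Real.dist_eq] at a1 a2
  rw [abs_lt] at a1 a2 hh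
  have hs2 : 0 ≤ 1 - s := by linarith
  have b1 := mul_le_mul_of_nonneg_left a1.1.le hs0
  have b2 := mul_le_mul_of_nonneg_left a1.2.le hs0
  have b3 := mul_le_mul_of_nonneg_left a2.1.le hs2
  have b4 := mul_le_mul_of_nonneg_left a2.2.le hs2
  constructor <;> nlinarith [hh.1, hh.2]
end

section
/- Let X be a compact metric space, f : X → X a homeomorphism, and (ψ_n)_{n≥1} a sequence of continuous functions that is subadditive with respect to f with (ψ_n/n)_{n≥1} uniformly bounded from below. Let τ be a Borel probability measure on the space P(X) of Borel probability measures on X (with the weak* topology) such that τ-almost every θ ∈ P(X) is f-invariant, ergodic, and satisfies ψ(θ) < 0, and let μ ∈ P(X) be the barycenter of τ, i.e. μ(A) = ∫ θ(A) dτ(θ) for every Borel set A ⊆ X. Then μ is f-invariant, and for every γ with 0 < γ < −ψ(μ) there exist a positive integer n0 and κ > 0 such that for every f-invariant ergodic Borel probability measure ν with D(ν, μ) < κ one has ψ(μ) − γ/2 < ∫(1/n0)ψ_{n0} dν < ψ(μ) + γ/2 < 0. -/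
open MeasureTheory Filter

/-- Let `X` be a compact metric space, `f` a homeomorphism of `X`, and `(ψ n)` a subadditive
sequence of continuous functions with `(ψ n / n)` uniformly bounded below. Let `τ` be a Borel
probability measure on the space `P(X)` of Borel probability measures on `X` (weak* topology)
such that `τ`-a.e. `θ` is `f`-invariant, ergodic and satisfies `ψ(θ) < 0`, and let `μ` be the
barycenter of `τ`. Then `μ` is `f`-invariant, and for every `0 < γ < -ψ(μ)` there are `n0 ≥ 1`
and `κ > 0` such that for every `f`-invariant ergodic Borel probability measure `ν` with
`D(ν, μ) < κ` (Lévy–Prokhorov metric) one has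
`ψ(μ) - γ/2 < ∫ (1/n0) ψ n0 dν < ψ(μ) + γ/2 < 0`. -/
theorem ergodic_decomposition_negative_exponent
    {X : Type*} [MetricSpace X] [CompactSpace X] [MeasurableSpace X] [BorelSpace X]
    [MeasurableSpace (ProbabilityMeasure X)] [BorelSpace (ProbabilityMeasure X)]
    (f : X ≃ₜ X) (ψ : ℕ → X → ℝ) (hcont : ∀ n, 1 ≤ n → Continuous (ψ n))
    (hsub : ∀ n m, 1 ≤ n → 1 ≤ m → ∀ x, ψ (n + m) x ≤ ψ n x + ψ m ((⇑f)^[n] x))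
    (C : ℝ) (hbd : ∀ n, 1 ≤ n → ∀ x, C ≤ ψ n x / (n : ℝ))
    (τ : Measure (ProbabilityMeasure X)) [IsProbabilityMeasure τ]
    (hτ : ∀ᵐ (θ : ProbabilityMeasure X) ∂τ,
      Ergodic (⇑f) (θ : Measure X) ∧ psiInf ψ (θ : Measure X) < 0)
    (μ : Measure X) [IsProbabilityMeasure μ]
    (hbar : ∀ A : Set X, MeasurableSet A → μ A = ∫⁻ θ : ProbabilityMeasure X, (θ : Measure X) A ∂τ) :
    MeasurePreserving (⇑f) μ μ ∧
      ∀ γ : ℝ, 0 < γ → γ < -psiInf ψ μ →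
        ∃ (n0 : ℕ) (κ : ℝ), 1 ≤ n0 ∧ 0 < κ ∧
          ∀ ν : Measure X, IsProbabilityMeasure ν → Ergodic (⇑f) ν →
            levyProkhorovDist ν μ < κ →
            psiInf ψ μ - γ / 2 < (n0 : ℝ)⁻¹ * ∫ x, ψ n0 x ∂ν ∧
            (n0 : ℝ)⁻¹ * ∫ x, ψ n0 x ∂ν < psiInf ψ μ + γ / 2 ∧
            psiInf ψ μ + γ / 2 < 0 := by
  refine ⟨⟨f.continuous.measurable, ?_⟩, ?_⟩
  · ext A hA
    rw [Measure.map_apply f.continuous.measurable hA, hbar _ (f.continuous.measurable hA),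
      hbar _ hA]
    refine lintegral_congr_ae ?_
    filter_upwards [hτ] with θ hθ
    exact hθ.1.toMeasurePreserving.measure_preimage hA.nullMeasurableSet
  · intro γ hγ hγ2
    have hint : ∀ n, 1 ≤ n → Integrable (ψ n) μ := fun n hn =>
      (BoundedContinuousFunction.mkOfCompact ⟨ψ n, hcont n hn⟩).integrable μ
    have hbdd : BddBelow ((fun n : ℕ => (n : ℝ)⁻¹ * ∫ x, ψ n x ∂μ) '' (Set.Ici 1)) := by
      refine ⟨C, ?_⟩
      rintro _ ⟨n, hn, rfl⟩
      have hn' : 1 ≤ n := hn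
      have h1 : ∫ _x, C ∂μ ≤ ∫ x, ψ n x / (n : ℝ) ∂μ :=
        integral_mono (integrable_const C) ((hint n hn').div_const _) (hbd n hn')
      rw [integral_div] at h1
      simp only [integral_const, probReal_univ, one_smul] at h1
      simp only
      rw [inv_mul_eq_div]
      exact h1
    have hne : ((fun n : ℕ => (n : ℝ)⁻¹ * ∫ x, ψ n x ∂μ) '' (Set.Ici 1)).Nonempty :=
      ⟨_, 1, Set.mem_Ici.2 le_rfl, rfl⟩
    obtain ⟨_, ⟨n0, hn0, rfl⟩, hlt⟩ := exists_lt_of_csInf_lt hne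
      (show sInf _ < psiInf ψ μ + γ / 2 by unfold psiInf; linarith)
    have hn0' : 1 ≤ n0 := hn0
    have hge : psiInf ψ μ ≤ (n0 : ℝ)⁻¹ * ∫ x, ψ n0 x ∂μ := csInf_le hbdd ⟨n0, hn0, rfl⟩
    let g := BoundedContinuousFunction.mkOfCompact ⟨ψ n0, hcont n0 hn0'⟩
    let M : LevyProkhorov (ProbabilityMeasure X) := .ofMeasure ⟨μ, inferInstance⟩
    have ht := (ProbabilityMeasure.tendsto_iff_forall_integral_tendsto.1
      (LevyProkhorov.continuous_toMeasure_probabilityMeasure.tendsto M) g).const_mul (n0 : ℝ)⁻¹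
    have hev := ht.eventually (Ioo_mem_nhds
      (show psiInf ψ μ - γ / 2 < (n0 : ℝ)⁻¹ * ∫ x, ψ n0 x ∂μ by linarith) hlt)
    obtain ⟨κ, hκ, hball⟩ := Metric.eventually_nhds_iff.1 hev
    refine ⟨n0, κ, hn0', hκ, fun ν hν _ hd => ?_⟩
    have h := @hball (.ofMeasure ⟨ν, hν⟩) hd
    exact ⟨h.1, h.2, by linarith⟩
end
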